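/- Let X be an infinite separable locally compact metric space and let f : X → X be a continuous weakly mixing map. Then there exist countably infinitely many pairwise disjoint Cantor sets S⁽¹⁾, S⁽²⁾, S⁽³⁾, … in X, each consisting of totally transitive points of f, whose union S = ⋃_{j≥1} S⁽ʲ⁾ is dense in X and has the property: for every n ≥ 1 and all pairwise distinct points a₁, …, aₙ ∈ S, the point (a₁, …, aₙ) is a totally transitive point of the n-fold product map f × f × … × f : Xⁿ → Xⁿ, i.e., for every k ≥ 1 the orbit {(f × … × f)^{km}(a₁, …, aₙ) : m ≥ 0} is dense in Xⁿ. -/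

import Mathlib

/-- `f` is (topologically) weakly mixing. -/
def WeaklyMixing {X : Type*} [TopologicalSpace X] (f : X → X) : Prop :=
  ∀ U₁ U₂ V₁ V₂ : Set X, IsOpen U₁ → IsOpen U₂ → IsOpen V₁ → IsOpen V₂ →
    U₁.Nonempty → U₂.Nonempty → V₁.Nonempty → V₂.Nonempty →
    ∃ n : ℕ, 1 ≤ n ∧ (f^[n] '' U₁ ∩ V₁).Nonempty ∧ (f^[n] '' U₂ ∩ V₂).Nonempty

/-- A Cantor set: a nonempty compact, perfect, totally disconnected subset. -/
def IsCantorSet {X : Type*} [TopologicalSpace X] (C : Set X) : Prop :=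
  C.Nonempty ∧ IsCompact C ∧ Perfect C ∧ IsTotallyDisconnected C

/-- `x` is a totally transitive point of `g`: for every `k ≥ 1` the orbit of `x`
under `g^k` is dense. -/
def TotallyTransitivePoint {Y : Type*} [TopologicalSpace Y] (g : Y → Y) (x : Y) : Prop :=
  ∀ k : ℕ, 1 ≤ k → Dense (Set.range fun m : ℕ => g^[k * m] x)

/-- The `n`-fold product map `f × f × ⋯ × f` on `Xⁿ`. -/
def prodMap {X : Type*} (n : ℕ) (f : X → X) : (Fin n → X) → (Fin n → X) :=
  fun x i => f (x i)

/-!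
Write `K = {0, 1}^ℕ`. The sets `S j` are the ranges of a generic sequence `φ : ℕ → C(K, X)`, found
by the Baire category theorem. Given finitely many pieces `φ (j i) '' C i`, where the sets
`{j i} × C i` are disjoint and clopen in `ℕ × K`, and open targets `V i`, the sequences `φ` for
which a single iterate of `f ^ k` carries every piece into its target form an open set. It is dense:
since `K` is zero-dimensional, `φ` is approximated by locally constant maps, and weak mixing, which
handles any finite number of pairs of open sets at a single time divisible by `k` (Furstenberg),
allows perturbing their finitely many values into points that visit the targets simultaneously.
For `φ` in all of the countably many resulting sets, distinct points of `ℕ × K` are sent to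
jointly totally transitive points; these are automatically distinct, because otherwise their joint
orbit would stay in a closed diagonal.
-/

open Set Filter Topology TopologicalSpace Function

section Polish

theorem isOpen_range_of_isDenseEmbedding {X Y : Type*} [TopologicalSpace X]
    [WeaklyLocallyCompactSpace X] [TopologicalSpace Y] [T2Space Y] {e : X → Y}
    (he : IsDenseEmbedding e) : IsOpen (range e) := by
  rw [isOpen_iff_mem_nhds]
  rintro _ ⟨x, rfl⟩
  obtain ⟨L, hL, hLx⟩ := exists_compact_mem_nhds x
  rw [he.isInducing.nhds_eq_comap, mem_comap] at hLx
  obtain ⟨t, ht, htL⟩ := hLx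
  obtain ⟨O, hOt, hO, hxO⟩ := mem_nhds_iff.1 ht
  refine mem_of_superset (hO.mem_nhds hxO) ?_
  calc O ⊆ closure (O ∩ range e) := he.dense.open_subset_closure_inter hO
    _ ⊆ e '' L := closure_minimal (by rintro _ ⟨hz, z, rfl⟩; exact ⟨z, htL (hOt hz), rfl⟩)
        (hL.image he.continuous).isClosed
    _ ⊆ range e := image_subset_range e L

theorem polishSpace_of_weaklyLocallyCompactSpace (X : Type*) [TopologicalSpace X] [T2Space X]
    [SecondCountableTopology X] [WeaklyLocallyCompactSpace X] : PolishSpace X := by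
  let := metrizableSpaceMetric X
  have he : IsDenseEmbedding ((↑) : X → UniformSpace.Completion X) :=
    UniformSpace.Completion.isDenseEmbedding_coe
  have := (isOpen_range_of_isDenseEmbedding he).polishSpace
  exact he.isEmbedding.toHomeomorph.isClosedEmbedding.polishSpace

end Polish

section Product

variable {ι : Type*} {Z : ι → Type*}

theorem tendsto_update_cofinite [DecidableEq ι] [∀ i, TopologicalSpace (Z i)] (x y : ∀ i, Z i) :
    Tendsto (fun i => update x i (y i)) cofinite (𝓝 x) :=
  tendsto_pi_nhds.2 fun i => tendsto_const_nhds.congr' <|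
    (eventually_cofinite_ne i).mono fun _ hj => (update_of_ne hj.symm _ _).symm

theorem perfectSpace_pi [Infinite ι] [∀ i, TopologicalSpace (Z i)] [∀ i, Nontrivial (Z i)] :
    PerfectSpace (∀ i, Z i) := by
  classical
  refine perfectSpace_iff_forall_not_isolated.2 fun x => ?_
  choose y hy using fun i => exists_ne (x i)
  exact (tendsto_nhdsWithin_iff.2 ⟨tendsto_update_cofinite x y,
    .of_forall fun i => update_ne_self_iff.2 (hy i)⟩).neBot

theorem dense_of_forall_exists_dist_lt [∀ i, PseudoMetricSpace (Z i)] {G : Set (∀ i, Z i)}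
    (hG : ∀ x : ∀ i, Z i, ∀ ε > 0, ∃ y ∈ G, ∀ i, dist (x i) (y i) < ε) : Dense G := by
  intro x
  choose y hyG hy using fun n : ℕ => hG x (1 / (n + 1)) Nat.one_div_pos_of_nat
  suffices Tendsto y atTop (𝓝 x) from mem_closure_of_tendsto this (.of_forall hyG)
  refine tendsto_pi_nhds.2 fun i => ?_
  rw [tendsto_iff_dist_tendsto_zero]
  refine squeeze_zero (fun _ => dist_nonneg) (fun n => ?_) tendsto_one_div_add_atTop_nhds_zero_nat
  rw [dist_comm]
  exact (hy n i).le

end Product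

section HittingTimes

variable {X : Type*} {f : X → X}

/-- The set `N(U, V)` of topological dynamics: the times at which the orbit of some point of `U`
visits `V`. Time `0` is allowed. -/
def hittingTimes (f : X → X) (U V : Set X) : Set ℕ :=
  {n | ∃ x ∈ U, f^[n] x ∈ V}

variable [TopologicalSpace X]

namespace WeaklyMixing

theorem nonempty_hittingTimes (h : WeaklyMixing f) {U V : Set X} (hU : IsOpen U) (hV : IsOpen V)
    (hU' : U.Nonempty) (hV' : V.Nonempty) : (hittingTimes f U V).Nonempty := by
  obtain ⟨n, -, ⟨_, ⟨x, hx, rfl⟩, hxV⟩, -⟩ := h U U V V hU hU hV hV hU' hU' hV' hV'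
  exact ⟨n, x, hx, hxV⟩

theorem denseRange (h : WeaklyMixing f) : DenseRange f := by
  refine dense_iff_inter_open.2 fun V hV hV' => ?_
  obtain ⟨n, hn, ⟨_, ⟨x, -, rfl⟩, hxV⟩, -⟩ :=
    h V V V V hV hV hV hV hV' hV' hV' hV'
  obtain ⟨n, rfl⟩ := Nat.exists_eq_add_of_le' hn
  rw [iterate_succ_apply'] at hxV
  exact ⟨_, hxV, mem_range_self _⟩

theorem denseRange_iterate (h : WeaklyMixing f) (hf : Continuous f) (n : ℕ) :
    DenseRange f^[n] := by
  induction n with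
  | zero => exact denseRange_id
  | succ n ih => exact ih.comp h.denseRange (hf.iterate n)

theorem exists_hittingTimes_subset_inter (h : WeaklyMixing f) (hf : Continuous f)
    {U₁ U₂ V₁ V₂ : Set X} (hU₁ : IsOpen U₁) (hU₂ : IsOpen U₂) (hV₁ : IsOpen V₁) (hV₂ : IsOpen V₂)
    (hU₁' : U₁.Nonempty) (hU₂' : U₂.Nonempty) (hV₁' : V₁.Nonempty) (hV₂' : V₂.Nonempty) :
    ∃ A B : Set X, IsOpen A ∧ IsOpen B ∧ A.Nonempty ∧ B.Nonempty ∧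
      hittingTimes f A B ⊆ hittingTimes f U₁ V₁ ∩ hittingTimes f U₂ V₂ := by
  obtain ⟨n, -, ⟨_, ⟨x, hxU, rfl⟩, hxU₂⟩, ⟨_, ⟨y, hyV, rfl⟩, hyV₂⟩⟩ :=
    h U₁ V₁ U₂ V₂ hU₁ hV₁ hU₂ hV₂ hU₁' hV₁' hU₂' hV₂'
  refine ⟨U₁ ∩ f^[n] ⁻¹' U₂, V₁ ∩ f^[n] ⁻¹' V₂, hU₁.inter (hU₂.preimage (hf.iterate n)),
    hV₁.inter (hV₂.preimage (hf.iterate n)), ⟨x, hxU, hxU₂⟩, ⟨y, hyV, hyV₂⟩, ?_⟩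
  rintro m ⟨z, ⟨hzU₁, hzU₂⟩, hzV₁, hzV₂⟩
  refine ⟨⟨z, hzU₁, hzV₁⟩, f^[n] z, hzU₂, ?_⟩
  rwa [(Function.Commute.iterate_iterate_self f m n).eq z]

variable [Nonempty X] {ι : Type*} [Finite ι] {U V : ι → Set X}

theorem exists_hittingTimes_subset_iInter (h : WeaklyMixing f) (hf : Continuous f)
    (hU : ∀ i, IsOpen (U i)) (hV : ∀ i, IsOpen (V i)) (hU' : ∀ i, (U i).Nonempty)
    (hV' : ∀ i, (V i).Nonempty) :
    ∃ A B : Set X, IsOpen A ∧ IsOpen B ∧ A.Nonempty ∧ B.Nonempty ∧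
      hittingTimes f A B ⊆ ⋂ i, hittingTimes f (U i) (V i) := by
  classical
  cases nonempty_fintype ι
  suffices ∀ s : Finset ι, ∃ A B : Set X, IsOpen A ∧ IsOpen B ∧ A.Nonempty ∧ B.Nonempty ∧
      hittingTimes f A B ⊆ ⋂ i ∈ s, hittingTimes f (U i) (V i) by
    simpa using this Finset.univ
  intro s
  induction s using Finset.induction_on with
  | empty => exact ⟨univ, univ, isOpen_univ, isOpen_univ, univ_nonempty, univ_nonempty, by simp⟩
  | insert i s _ ih =>
    obtain ⟨A, B, hA, hB, hA', hB', hAB⟩ := ih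
    obtain ⟨A', B', hA'o, hB'o, hA'n, hB'n, hsub⟩ :=
      h.exists_hittingTimes_subset_inter hf (hU i) hA (hV i) hB (hU' i) hA' (hV' i) hB'
    refine ⟨A', B', hA'o, hB'o, hA'n, hB'n, ?_⟩
    rw [Finset.set_biInter_insert]
    exact hsub.trans (inter_subset_inter_right _ hAB)

theorem exists_mul_mem_hittingTimes (h : WeaklyMixing f) (hf : Continuous f)
    (hU : ∀ i, IsOpen (U i)) (hV : ∀ i, IsOpen (V i)) (hU' : ∀ i, (U i).Nonempty)
    (hV' : ∀ i, (V i).Nonempty) {k : ℕ} (hk : 1 ≤ k) :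
    ∃ m, ∀ i, k * m ∈ hittingTimes f (U i) (V i) := by
  obtain ⟨A, B, hA, hB, hA', hB', hAB⟩ := h.exists_hittingTimes_subset_iInter hf hU hV hU' hV'
  obtain ⟨C, D, hC, hD, hC', hD', hCD⟩ :=
    h.exists_hittingTimes_subset_iInter hf (U := fun _ : Fin k => A)
      (V := fun r => f^[r] ⁻¹' B) (fun _ => hA) (fun r => hB.preimage (hf.iterate r))
      (fun _ => hA') fun r => (h.denseRange_iterate hf r).exists_mem_open hB hB'
  obtain ⟨n, hn⟩ := h.nonempty_hittingTimes hC hD hC' hD'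
  have hblock : ∀ r < k, r + n ∈ hittingTimes f A B := fun r hr => by
    obtain ⟨x, hxA, hxB⟩ := mem_iInter.1 (hCD hn) ⟨r, hr⟩
    exact ⟨x, hxA, by rwa [iterate_add_apply]⟩
  obtain ⟨m, r, hr, hm⟩ : ∃ m, ∃ r < k, r + n = k * m := by
    have hdiv := Nat.div_add_mod (n + (k - 1)) k
    have hmod := Nat.mod_lt (n + (k - 1)) hk
    exact ⟨(n + (k - 1)) / k, k - 1 - (n + (k - 1)) % k, by omega, by omega⟩
  exact ⟨m, mem_iInter.1 (hAB (hm ▸ hblock r hr))⟩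

end WeaklyMixing

end HittingTimes

section TotallyTransitivePoint

variable {X : Type*} {f : X → X} {n : ℕ}

theorem iterate_prodMap (f : X → X) (n m : ℕ) : (prodMap n f)^[m] = prodMap n f^[m] := by
  induction m with
  | zero => rfl
  | succ m ih => rw [iterate_succ, ih, iterate_succ]; rfl

variable [TopologicalSpace X] {a : Fin n → X}

theorem totallyTransitivePoint_prodMap_of_isTopologicalBasis {B : Set (Set X)}
    (hB : IsTopologicalBasis B)
    (h : ∀ k, 1 ≤ k → ∀ V : Fin n → Set X, (∀ i, V i ∈ B) → (∀ i, (V i).Nonempty) →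
      ∃ m, ∀ i, f^[k * m] (a i) ∈ V i) :
    TotallyTransitivePoint (prodMap n f) a := by
  refine fun k hk => dense_iff_inter_open.2 fun O hO ⟨z, hz⟩ => ?_
  obtain ⟨u, hu, huO⟩ := isOpen_pi_iff'.1 hO z hz
  choose V hVB hzV hVu using fun i => hB.exists_subset_of_mem_open (hu i).2 (hu i).1
  obtain ⟨m, hm⟩ := h k hk V hVB fun i => ⟨z i, hzV i⟩
  refine ⟨_, huO fun i _ => hVu i ?_, m, rfl⟩
  simpa only [iterate_prodMap, prodMap] using hm i

namespace TotallyTransitivePoint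

theorem apply_of_prodMap (h : TotallyTransitivePoint (prodMap n f) a) (i : Fin n) :
    TotallyTransitivePoint f (a i) := by
  intro k hk
  have : Nonempty X := ⟨a i⟩
  have hcomp := (surjective_eval i).denseRange.comp (h k hk) (continuous_apply i)
  simpa only [DenseRange, comp_def, iterate_prodMap, prodMap, eval] using hcomp

theorem injective_of_prodMap [T2Space X] [Nontrivial X]
    (h : TotallyTransitivePoint (prodMap n f) a) : Injective a := by
  intro i i' hii'
  by_contra hne
  have hdiag : ∀ z : Fin n → X, z i = z i' := by
    refine isClosed_property (h 1 le_rfl) (isClosed_eq (by fun_prop) (by fun_prop)) fun m => ?_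
    simp only [iterate_prodMap, prodMap, hii']
  obtain ⟨x, y, hxy⟩ := exists_pair_ne X
  exact hxy (by simpa [update_of_ne (Ne.symm hne)] using hdiag (update (fun _ => y) i x))

end TotallyTransitivePoint

end TotallyTransitivePoint

section LocallyConstant

variable {K : Type*} [TopologicalSpace K]

theorem exists_locallyConstant_piecewise {ι Z : Type*} [Finite ι] {C : ι → Set K}
    (hC : ∀ i, IsClopen (C i)) (hdisj : Pairwise (Disjoint on C)) (χ : LocallyConstant K Z)
    (q : ι → Z → Z) :
    ∃ ψ : LocallyConstant K Z, (∀ i, ∀ y ∈ C i, ψ y = q i (χ y)) ∧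
      ∀ y, (∀ i, y ∉ C i) → ψ y = χ y := by
  classical
  let ψ y := if h : ∃ i, y ∈ C i then q h.choose (χ y) else χ y
  have hψ : IsLocallyConstant ψ := by
    refine (IsLocallyConstant.iff_eventually_eq ψ).2 fun y => ?_
    have hmem : ∀ᶠ z in 𝓝 y, ∀ i, z ∈ C i ↔ y ∈ C i := eventually_all.2 fun i => by
      by_cases hy : y ∈ C i
      · filter_upwards [(hC i).isOpen.mem_nhds hy] with z hz using iff_of_true hz hy
      · filter_upwards [(hC i).compl.isOpen.mem_nhds hy] with z hz using iff_of_false hz hy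
    filter_upwards [hmem, χ.isLocallyConstant.eventually_eq y] with z hz hχz
    have hχz : χ z = χ y := hχz
    simp only [ψ, hz, hχz]
  refine ⟨⟨ψ, hψ⟩, fun i y hy => ?_, fun y hy => dif_neg (not_exists.2 hy)⟩
  have hex : ∃ i, y ∈ C i := ⟨i, hy⟩
  have hchoose : hex.choose = i := by
    by_contra hne
    exact disjoint_left.1 (hdisj hne) hex.choose_spec hy
  exact (dif_pos hex).trans (by rw [hchoose])

variable [CompactSpace K] [T2Space K] [TotallyDisconnectedSpace K]

theorem exists_locallyConstant_dist_lt {X : Type*} [PseudoMetricSpace X] (φ : C(K, X)) {ε : ℝ}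
    (hε : 0 < ε) : ∃ χ : LocallyConstant K X, ∀ y, dist (φ y) (χ y) < ε := by
  obtain ⟨n, g, v, hg, hgv⟩ := φ.exists_finite_approximation_of_mem_nhds_diagonal
    (nhdsSet_diagonal_le_uniformity (Metric.dist_mem_uniformity hε))
  exact ⟨⟨v ∘ g, ((IsLocallyConstant.iff_continuous g).2 hg).comp v⟩, hgv⟩

theorem exists_clopens_pairwiseDisjoint {s : Set K} (hs : s.Finite) :
    ∃ C : K → Clopens K, (∀ y, y ∈ C y) ∧ s.PairwiseDisjoint fun y => (C y : Set K) := by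
  obtain ⟨U, hU, hdisj⟩ := hs.t2_separation
  choose C hC hyC hCU using fun y => compact_exists_isClopen_in_isOpen (hU y).2 (hU y).1
  exact ⟨fun y => ⟨C y, hC y⟩, hyC, hdisj.mono hCU⟩

end LocallyConstant

theorem isCantorSet_range {K X : Type*} [TopologicalSpace K] [CompactSpace K] [Nonempty K]
    [PerfectSpace K] [TotallyDisconnectedSpace K] [TopologicalSpace X] [T2Space X] {g : K → X}
    (hg : Continuous g) (hinj : Injective g) : IsCantorSet (range g) := by
  have hcompact : IsCompact (range g) := isCompact_range hg
  refine ⟨range_nonempty g, hcompact, ⟨hcompact.isClosed, ?_⟩, ?_⟩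
  · rintro _ ⟨y, rfl⟩
    have := (PerfectSpace.univ_preperfect y (mem_univ y)).map hg.continuousAt hinj
    rwa [map_principal, image_univ] at this
  · exact (hg.isClosedEmbedding hinj).isEmbedding.isTotallyDisconnected_range.2 inferInstance

section GenericSequence

variable {α K X : Type*} [TopologicalSpace K]

section Density

variable [TopologicalSpace X]

theorem isOpen_setOf_exists_apply_mem {W : Set X} (hW : IsOpen W) :
    IsOpen {φ : α → C(K, X) | ∃ j y, φ j y ∈ W} := by
  simp only [ofPred_exists]
  exact isOpen_iUnion fun j => isOpen_iUnion fun y =>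
    hW.preimage ((continuous_eval_const y).comp (continuous_apply j))

theorem dense_setOf_exists_apply_mem [Infinite α] [Nonempty K] {W : Set X} (hW : W.Nonempty) :
    Dense {φ : α → C(K, X) | ∃ j y, φ j y ∈ W} := by
  classical
  obtain ⟨w, hw⟩ := hW
  intro φ
  refine mem_closure_of_tendsto (tendsto_update_cofinite φ fun _ => .const K w)
    (.of_forall fun j => ⟨j, Classical.arbitrary K, ?_⟩)
  rwa [update_self]

theorem eventually_residual_dense_iUnion_range [Infinite α] [Nonempty K]
    [SecondCountableTopology X] :
    ∀ᶠ φ : α → C(K, X) in residual (α → C(K, X)), Dense (⋃ j, range (φ j)) := by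
  have hmeet : ∀ᶠ φ : α → C(K, X) in residual (α → C(K, X)),
      ∀ W : countableBasis X, ∃ j y, φ j y ∈ W.1 :=
    eventually_countable_forall.2 fun W =>
      residual_of_dense_open (isOpen_setOf_exists_apply_mem (isOpen_of_mem_countableBasis W.2))
        (dense_setOf_exists_apply_mem (nonempty_of_mem_countableBasis W.2))
  filter_upwards [hmeet] with φ hφ
  refine (isBasis_countableBasis X).dense_iff.2 fun W hW _ => ?_
  obtain ⟨j, y, hy⟩ := hφ ⟨W, hW⟩
  exact ⟨_, hy, mem_iUnion.2 ⟨j, mem_range_self y⟩⟩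

end Density

section SimultaneousHits

variable {ι : Type*}

/-- The families of maps `φ` such that, at some time divisible by `k`, all the pieces
`φ (j i) '' C i` are inside their respective targets `V i`. -/
def simultaneousHits [TopologicalSpace X] (f : X → X) (k : ℕ) (j : ι → α) (C : ι → Clopens K)
    (V : ι → Set X) : Set (α → C(K, X)) :=
  {φ | ∃ m, ∀ i, MapsTo (φ (j i)) (C i) (f^[k * m] ⁻¹' V i)}

variable [Finite ι] {f : X → X} {k : ℕ} {j : ι → α} {C : ι → Clopens K} {V : ι → Set X}
  [CompactSpace K]

theorem isOpen_simultaneousHits [TopologicalSpace X] (hf : Continuous f)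
    (hV : ∀ i, IsOpen (V i)) : IsOpen (simultaneousHits f k j C V) := by
  simp only [simultaneousHits, ofPred_exists, ofPred_forall]
  refine isOpen_iUnion fun m => isOpen_iInter_of_finite fun i => ?_
  have hopen : IsOpen {g : C(K, X) | MapsTo g (C i) (f^[k * m] ⁻¹' V i)} :=
    ContinuousMap.isOpen_setOfPred_mapsTo (C i).isClopen.isClosed.isCompact
      ((hV i).preimage (hf.iterate (k * m)))
  exact hopen.preimage (continuous_apply (A := fun _ => C(K, X)) (j i))

variable [T2Space K] [TotallyDisconnectedSpace K]

theorem dense_simultaneousHits [PseudoMetricSpace X] [Nonempty X] (hwm : WeaklyMixing f)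
    (hf : Continuous f) (hk : 1 ≤ k)
    (hC : Pairwise fun i i' => j i = j i' → Disjoint (C i : Set K) (C i'))
    (hV : ∀ i, IsOpen (V i)) (hV' : ∀ i, (V i).Nonempty) :
    Dense (simultaneousHits f k j C V) := by
  refine dense_of_forall_exists_dist_lt fun φ ε hε => ?_
  have hε2 := half_pos hε
  choose χ hχ using fun a => exists_locallyConstant_dist_lt (φ a) hε2
  have hfin := fun i => (χ (j i)).range_finite.to_subtype
  obtain ⟨m, hm⟩ := hwm.exists_mul_mem_hittingTimes hf (ι := Σ i, range (χ (j i)))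
    (U := fun t => Metric.ball t.2 (ε / 2)) (V := fun t => V t.1) (fun _ => Metric.isOpen_ball)
    (fun t => hV t.1) (fun _ => Metric.nonempty_ball.2 hε2) (fun t => hV' t.1) hk
  choose! q hqball hqV using fun i v (hv : v ∈ range (χ (j i))) => hm ⟨i, v, hv⟩
  choose ψ hψC hψ using fun a => exists_locallyConstant_piecewise
    (C := fun i : {i // j i = a} => (C i : Set K)) (fun i => (C i).isClopen)
    (fun i i' hne => hC (Subtype.coe_ne_coe.2 hne) (i.2.trans i'.2.symm)) (χ a) (fun i => q i)
  have hχψ : ∀ a y, dist (χ a y) (ψ a y) < ε / 2 := fun a y => by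
    by_cases hy : ∃ i : {i // j i = a}, y ∈ C i
    · obtain ⟨⟨i, rfl⟩, hy⟩ := hy
      rw [hψC _ ⟨i, rfl⟩ y hy, dist_comm]
      exact hqball i _ (mem_range_self y)
    · rwa [hψ a y (not_exists.1 hy), dist_self]
  refine ⟨fun a => ψ a, ⟨m, fun i y hy => ?_⟩,
    fun a => (ContinuousMap.dist_lt_iff hε).2 fun y => ?_⟩
  · rw [mem_preimage, LocallyConstant.coe_continuousMap, hψC _ ⟨i, rfl⟩ y hy]
    exact hqV i _ (mem_range_self y)
  · calc dist (φ a y) (ψ a y) ≤ dist (φ a y) (χ a y) + dist (χ a y) (ψ a y) := dist_triangle ..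
      _ < ε / 2 + ε / 2 := add_lt_add (hχ a y) (hχψ a y)
      _ = ε := add_halves ε

theorem eventually_residual_totallyTransitivePoint_prodMap [Countable α]
    [SecondCountableTopology K] [PseudoMetricSpace X] [SecondCountableTopology X] [Nonempty X]
    (hwm : WeaklyMixing f) (hf : Continuous f) :
    ∀ᶠ φ : α → C(K, X) in residual (α → C(K, X)), ∀ (n : ℕ) (p : Fin n → α × K), Injective p →
      TotallyTransitivePoint (prodMap n f) fun i => φ (p i).1 (p i).2 := by
  have : Countable (Clopens K) := Clopens.countable_iff_secondCountable.2 inferInstance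
  have hhits : ∀ᶠ φ : α → C(K, X) in residual (α → C(K, X)),
      ∀ (n k : ℕ) (j : Fin n → α) (C : Fin n → Clopens K) (V : Fin n → countableBasis X),
        1 ≤ k → (Pairwise fun i i' => j i = j i' → Disjoint (C i : Set K) (C i')) →
          φ ∈ simultaneousHits f k j C fun i => V i := by
    simp only [eventually_countable_forall]
    intro n k j C V hk hC
    have hV := fun i => isOpen_of_mem_countableBasis (V i).2
    exact residual_of_dense_open (isOpen_simultaneousHits hf hV)
      (dense_simultaneousHits hwm hf hk hC hV fun i => nonempty_of_mem_countableBasis (V i).2)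
  filter_upwards [hhits] with φ hφ n p hp
  refine totallyTransitivePoint_prodMap_of_isTopologicalBasis (isBasis_countableBasis X)
    fun k hk V hV _ => ?_
  obtain ⟨C, hmem, hdisj⟩ := exists_clopens_pairwiseDisjoint (finite_range fun i => (p i).2)
  obtain ⟨m, hm⟩ := hφ n k (fun i => (p i).1) (fun i => C (p i).2) (fun i => ⟨V i, hV i⟩) hk
    fun i i' hne hj => hdisj (mem_range_self i) (mem_range_self i')
      fun hy => hne (hp (Prod.ext hj hy))
  exact ⟨m, fun i => hm i (hmem _)⟩

end SimultaneousHits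

end GenericSequence

theorem cantor_sets_of_totally_transitive_points_general {X : Type*} [TopologicalSpace X]
    [PolishSpace X] [Nontrivial X]
    (f : X → X) (hf : Continuous f) (hwm : WeaklyMixing f) :
    ∃ S : ℕ → Set X,
      (∀ i j, i ≠ j → Disjoint (S i) (S j)) ∧
      (∀ j, IsCantorSet (S j)) ∧
      (∀ j, ∀ x ∈ S j, TotallyTransitivePoint f x) ∧
      Dense (⋃ j, S j) ∧
      (∀ n : ℕ, 1 ≤ n → ∀ a : Fin n → X, (∀ i, a i ∈ ⋃ j, S j) →
        Function.Injective a → TotallyTransitivePoint (prodMap n f) a) := by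
  let := upgradeIsCompletelyMetrizable X
  have : PerfectSpace (ℕ → Bool) := perfectSpace_pi
  obtain ⟨φ, hdense, htrans⟩ := (dense_of_mem_residual
    (eventually_residual_dense_iUnion_range.and
      (eventually_residual_totallyTransitivePoint_prodMap (α := ℕ) (K := ℕ → Bool)
        hwm hf))).nonempty
  have hinj : Injective fun p : ℕ × (ℕ → Bool) => φ p.1 p.2 := fun p q hpq => by
    by_contra hne
    have hpair := htrans 2 ![p, q] (injective_pair_iff_ne.2 hne)
    exact zero_ne_one (hpair.injective_of_prodMap hpq)
  refine ⟨fun j => range (φ j), fun i j hij => ?_, fun j => ?_, ?_, hdense, ?_⟩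
  · rw [Set.disjoint_left]
    rintro _ ⟨y, rfl⟩ ⟨z, hz⟩
    exact hij (congrArg Prod.fst (@hinj (i, y) (j, z) hz.symm))
  · exact isCantorSet_range (φ j).continuous (hinj.comp (Prod.mk_right_injective j))
  · rintro j _ ⟨y, rfl⟩
    exact (htrans 1 (fun _ => (j, y)) (injective_of_subsingleton _)).apply_of_prodMap 0
  · intro n _ a ha ha'
    choose j y hy using fun i => mem_iUnion.1 (ha i)
    obtain rfl : (fun i => φ (j i) (y i)) = a := funext hy
    exact htrans n (fun i => (j i, y i))
      (Injective.of_comp (f := fun p : ℕ × (ℕ → Bool) => φ p.1 p.2) ha')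

theorem cantor_sets_of_totally_transitive_points {X : Type*} [MetricSpace X] [Infinite X]
    [TopologicalSpace.SeparableSpace X] [LocallyCompactSpace X]
    (f : X → X) (hf : Continuous f) (hwm : WeaklyMixing f) :
    ∃ S : ℕ → Set X,
      (∀ i j, i ≠ j → Disjoint (S i) (S j)) ∧
      (∀ j, IsCantorSet (S j)) ∧
      (∀ j, ∀ x ∈ S j, TotallyTransitivePoint f x) ∧
      Dense (⋃ j, S j) ∧
      (∀ n : ℕ, 1 ≤ n → ∀ a : Fin n → X, (∀ i, a i ∈ ⋃ j, S j) →
        Function.Injective a → TotallyTransitivePoint (prodMap n f) a) := by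
  have := polishSpace_of_weaklyLocallyCompactSpace X
  exact cantor_sets_of_totally_transitive_points_general f hf hwm
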